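/- Let α > 0, β ∈ (0, α), C₀ > 0 and λ' > 1. Then there exist ε > 0, σ > 0 and C' > 0 such that the following holds. Let μ be a Borel probability measure on ℂ, x₀ ∈ ℂ, n₀ a positive integer, and (r_j)_{j≥1} a sequence of reals with 0 < r_j < 1 such that: μ(B(x₀, r_j)) ≤ C₀·r_j^α for every j ≥ 1; r_1 ≥ exp(−ε·n₀); r_{j+1} ≥ r_j^{1+σ} for every j ≥ 1; and r_{j+1} ≤ r_j/2 for every j ≥ 1. Then ∫ dist(x, x₀)^{−β} dμ(x) ≤ C'·(λ')^{n₀}. -/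

import Mathlib

/-!
Decompose the plane into the complement of `B(x₀, r₁)` and the annuli
`B(x₀, r_j) \ B(x₀, r_{j+1})`. This gives the pointwise bound
`dist(x, x₀)^{-β} ≤ r₁^{-β} + ∑_j 1_{B(x₀, r_j)}(x) · r_{j+1}^{-β}`, valid even at `x = x₀`, where
the right side is infinite (`edist_rpow_neg_le`). After integration, the first term is at most
`exp(ε β n₀)`, which equals `λ'^{n₀}` for `ε = log λ' / β`. The `j`-th term of the sum is at most
`C₀ r_j^α r_j^{-β(1+σ)}`, which equals `C₀ r_j^δ` with `δ = (α - β)/2 > 0` for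
`σ = (α - β)/(2β)`. Since `r_j ≤ 2^{-(j-1)}`, a geometric series bounds the sum by a constant
depending on `α`, `β`, `C₀` only.
-/

open MeasureTheory Metric Filter

/-- Annulus decomposition of the singular kernel. At `x = x₀` the left side is `⊤`, and so is the
series, all of whose terms are then at least `1`. -/
lemma edist_rpow_neg_le {β : ℝ} (hβ : 0 < β) (x₀ : ℂ) (s : ℕ → ℝ)
    (hs : ∀ i, 0 < s i ∧ s i < 1) (x : ℂ) :
    edist x x₀ ^ (-β) ≤ ENNReal.ofReal (s 0 ^ (-β)) +
      ∑' i, (ball x₀ (s i)).indicator (fun _ => ENNReal.ofReal (s (i + 1) ^ (-β))) x := by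
  have key : ∀ i, x ∉ ball x₀ (s i) → edist x x₀ ^ (-β) ≤ ENNReal.ofReal (s i ^ (-β)) := by
    intro i hi
    rw [mem_ball, not_lt] at hi
    rw [← ENNReal.ofReal_rpow_of_pos (hs i).1, edist_dist]
    rw [ENNReal.rpow_neg, ENNReal.rpow_neg, ENNReal.inv_le_inv]
    exact ENNReal.rpow_le_rpow (ENNReal.ofReal_le_ofReal hi) hβ.le
  by_cases hall : ∀ i, x ∈ ball x₀ (s i)
  · have htop : ∑' i, (ball x₀ (s i)).indicator
        (fun _ => ENNReal.ofReal (s (i + 1) ^ (-β))) x = ⊤ := by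
      rw [← top_le_iff, ← ENNReal.tsum_const_eq_top_of_ne_zero (α := ℕ) one_ne_zero]
      refine ENNReal.tsum_le_tsum fun i => ?_
      rw [Set.indicator_of_mem (hall i), ← ENNReal.ofReal_one]
      exact ENNReal.ofReal_le_ofReal
        (Real.one_le_rpow_of_pos_of_le_one_of_nonpos (hs _).1 (hs _).2.le (by linarith))
    rw [htop, add_top]
    exact le_top
  · push Not at hall
    classical
    have hfind := Nat.find_spec hall
    rcases hk : Nat.find hall with _ | k
    · rw [hk] at hfind
      exact (key 0 hfind).trans le_self_add
    · rw [hk] at hfind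
      have hmem : x ∈ ball x₀ (s k) := by
        by_contra h
        have := Nat.find_min' hall h
        omega
      refine (key _ hfind).trans (le_trans ?_ le_add_self)
      refine le_trans ?_ (ENNReal.le_tsum k)
      rw [Set.indicator_of_mem hmem]

/-- The integral estimate of the Conclusion of the proof of Lemma 2.1: if a probability
measure `μ` satisfies `μ(B(x₀, r_j)) ≤ C₀ r_j^α` along a sequence of radii `r_j` which
starts no smaller than `exp(−ε n₀)` and decreases at a controlled rate
(`r_{j+1} ≥ r_j^{1+σ}`, `r_{j+1} ≤ r_j/2`), then `∫ dist(x, x₀)^{−β} dμ ≤ C'·(λ')^{n₀}`. -/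
theorem integral_dist_rpow_le (α β C₀ lam' : ℝ)
    (hα : 0 < α) (hβ : 0 < β) (hβα : β < α) (hC₀ : 0 < C₀) (hlam' : 1 < lam') :
    ∃ ε : ℝ, 0 < ε ∧ ∃ σ : ℝ, 0 < σ ∧ ∃ C' : ℝ, 0 < C' ∧
      ∀ (μ : Measure ℂ), IsProbabilityMeasure μ →
        ∀ (x₀ : ℂ) (n₀ : ℕ), 0 < n₀ →
          ∀ r : ℕ → ℝ,
            (∀ j : ℕ, 1 ≤ j → 0 < r j ∧ r j < 1) →
            (∀ j : ℕ, 1 ≤ j → μ (ball x₀ (r j)) ≤ ENNReal.ofReal (C₀ * r j ^ α)) →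
            Real.exp (-(ε * n₀)) ≤ r 1 →
            (∀ j : ℕ, 1 ≤ j → r j ^ (1 + σ) ≤ r (j + 1)) →
            (∀ j : ℕ, 1 ≤ j → r (j + 1) ≤ r j / 2) →
            ∫⁻ x, (edist x x₀) ^ (-β) ∂μ ≤ ENNReal.ofReal (C' * lam' ^ n₀) := by
  set δ : ℝ := (α - β) / 2 with hδ
  have hδ0 : 0 < δ := by linarith
  set q : ℝ := (1 / 2 : ℝ) ^ δ with hq
  have hq0 : 0 < q := by positivity
  have hq1 : q < 1 := Real.rpow_lt_one (by norm_num) (by norm_num) hδ0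
  have hD : 0 < C₀ * (1 - q)⁻¹ := mul_pos hC₀ (inv_pos.2 (by linarith))
  refine ⟨Real.log lam' / β, div_pos (Real.log_pos hlam') hβ, (α - β) / (2 * β),
    div_pos (by linarith) (by linarith), 1 + C₀ * (1 - q)⁻¹, by linarith, ?_⟩
  intro μ hμ x₀ n₀ _ r hr hball h1 hlow hhalf
  set s : ℕ → ℝ := fun i => r (i + 1) with hs_def
  have hs : ∀ i, 0 < s i ∧ s i < 1 := fun i => hr (i + 1) (by omega)
  have hgeom : ∀ i, s i ≤ (1 / 2 : ℝ) ^ i := by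
    intro i
    induction i with
    | zero => simpa using (hs 0).2.le
    | succ i ih =>
      have h : s (i + 1) ≤ s i / 2 := hhalf (i + 1) (by omega)
      rw [pow_succ]
      linarith
  have hfirst : s 0 ^ (-β) ≤ lam' ^ n₀ := by
    calc s 0 ^ (-β) ≤ Real.exp (-(Real.log lam' / β * n₀)) ^ (-β) :=
          Real.rpow_le_rpow_of_nonpos (Real.exp_pos _) h1 (by linarith)
      _ = lam' ^ n₀ := by
          rw [← Real.exp_mul, show -(Real.log lam' / β * n₀) * -β = n₀ * Real.log lam' by
            field_simp, Real.exp_nat_mul, Real.exp_log (by linarith)]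
  have hterm : ∀ i, s (i + 1) ^ (-β) * (C₀ * s i ^ α) ≤ C₀ * q ^ i := by
    intro i
    have hsi := (hs i).1
    have e1 : s (i + 1) ^ (-β) ≤ s i ^ ((1 + (α - β) / (2 * β)) * -β) := by
      rw [Real.rpow_mul hsi.le]
      exact Real.rpow_le_rpow_of_nonpos (Real.rpow_pos_of_pos hsi _)
        (hlow (i + 1) (by omega)) (by linarith)
    have e2 : s i ^ ((1 + (α - β) / (2 * β)) * -β) * s i ^ α = s i ^ δ := by
      rw [← Real.rpow_add hsi]
      congr 1
      rw [hδ]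
      field_simp
      ring
    have e3 : s i ^ δ ≤ q ^ i := by
      calc s i ^ δ ≤ ((1 / 2 : ℝ) ^ i) ^ δ := Real.rpow_le_rpow hsi.le (hgeom i) hδ0.le
        _ = q ^ i := by
          rw [hq, ← Real.rpow_natCast, ← Real.rpow_natCast, ← Real.rpow_mul (by norm_num),
            ← Real.rpow_mul (by norm_num), mul_comm]
    calc s (i + 1) ^ (-β) * (C₀ * s i ^ α)
        ≤ s i ^ ((1 + (α - β) / (2 * β)) * -β) * (C₀ * s i ^ α) :=
          mul_le_mul_of_nonneg_right e1 (mul_nonneg hC₀.le (Real.rpow_nonneg hsi.le _))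
      _ = C₀ * s i ^ δ := by rw [← e2]; ring
      _ ≤ C₀ * q ^ i := mul_le_mul_of_nonneg_left e3 hC₀.le
  have hsum : HasSum (fun i : ℕ => C₀ * q ^ i) (C₀ * (1 - q)⁻¹) :=
    (hasSum_geometric_of_lt_one hq0.le hq1).mul_left C₀
  have hmeas : ∀ i, Measurable
      ((ball x₀ (s i)).indicator (fun _ : ℂ => ENNReal.ofReal (s (i + 1) ^ (-β)))) :=
    fun i => measurable_const.indicator measurableSet_ball
  calc ∫⁻ x, (edist x x₀) ^ (-β) ∂μ
      ≤ ∫⁻ x, (ENNReal.ofReal (s 0 ^ (-β)) + ∑' i, (ball x₀ (s i)).indicator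
          (fun _ => ENNReal.ofReal (s (i + 1) ^ (-β))) x) ∂μ :=
        lintegral_mono fun x => edist_rpow_neg_le hβ x₀ s hs x
    _ = ENNReal.ofReal (s 0 ^ (-β)) +
          ∑' i, ENNReal.ofReal (s (i + 1) ^ (-β)) * μ (ball x₀ (s i)) := by
        rw [lintegral_add_left measurable_const, lintegral_const, measure_univ, mul_one,
          lintegral_tsum fun i => (hmeas i).aemeasurable]
        simp_rw [lintegral_indicator_const measurableSet_ball]
    _ ≤ ENNReal.ofReal (lam' ^ n₀) + ∑' i, ENNReal.ofReal (C₀ * q ^ i) := by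
        refine add_le_add (ENNReal.ofReal_le_ofReal hfirst) (ENNReal.tsum_le_tsum fun i => ?_)
        calc ENNReal.ofReal (s (i + 1) ^ (-β)) * μ (ball x₀ (s i))
            ≤ ENNReal.ofReal (s (i + 1) ^ (-β)) * ENNReal.ofReal (C₀ * s i ^ α) :=
              mul_le_mul_right (hball (i + 1) (by omega)) _
          _ = ENNReal.ofReal (s (i + 1) ^ (-β) * (C₀ * s i ^ α)) :=
              (ENNReal.ofReal_mul (Real.rpow_nonneg (hs _).1.le _)).symm
          _ ≤ ENNReal.ofReal (C₀ * q ^ i) := ENNReal.ofReal_le_ofReal (hterm i)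
    _ = ENNReal.ofReal (lam' ^ n₀ + C₀ * (1 - q)⁻¹) := by
        rw [← ENNReal.ofReal_tsum_of_nonneg (fun i => by positivity) hsum.summable,
          hsum.tsum_eq, ENNReal.ofReal_add (by positivity) hD.le]
    _ ≤ ENNReal.ofReal ((1 + C₀ * (1 - q)⁻¹) * lam' ^ n₀) := by
        refine ENNReal.ofReal_le_ofReal ?_
        have : 1 ≤ lam' ^ n₀ := one_le_pow₀ hlam'.le
        nlinarith
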